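/- Let u : ℝ³ → ℝ³ be smooth and divergence-free, and let n ∈ ℝ³ be a fixed unit vector. Then for each x, the map ℓ ↦ (n(ℓ)⊗n(ℓ)) u(x+ℓ) integrated against a radial mollifier is divergence-free in x: if v_L^ε(x) = ∫ φ^ε(ℓ)(n(ℓ)⊗n(ℓ)) u(x+ℓ) dℓ with n(ℓ) = ℓ/‖ℓ‖ and φ^ε a smooth radial compactly supported mollifier, then div_x v_L^ε = 0. -/

import Mathlib

open MeasureTheory

lemma EuclideanSpace.sum_smul_single {ι : Type*} [Fintype ι] [DecidableEq ι]
    (v : EuclideanSpace ℝ ι) :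
    ∑ i, v i • EuclideanSpace.single i (1 : ℝ) = v := by
  simpa using (EuclideanSpace.basisFun ι ℝ).sum_repr v

/-- Integration by parts against the divergence of a vector field. -/
lemma integral_fderiv_apply_eq_neg_integral_mul_div {ι : Type*} [Fintype ι] [DecidableEq ι]
    {f : EuclideanSpace ℝ ι → ℝ} {w : EuclideanSpace ℝ ι → EuclideanSpace ℝ ι}
    (hf : ContDiff ℝ 1 f) (hw : ContDiff ℝ 1 w)
    (hs : HasCompactSupport f ∨ HasCompactSupport w) :
    ∫ y, fderiv ℝ f y (w y) =
      -∫ y, f y * ∑ i, fderiv ℝ w y (EuclideanSpace.single i 1) i := by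
  have hf' : Continuous (fderiv ℝ f) := hf.continuous_fderiv one_ne_zero
  have hw' : Continuous (fderiv ℝ w) := hw.continuous_fderiv one_ne_zero
  have hfc := hf.continuous
  have hwc := hw.continuous
  have hsupp : ∃ K : Set (EuclideanSpace ℝ ι), IsCompact K ∧ ∀ y ∉ K,
      (f y = 0 ∧ fderiv ℝ f y = 0) ∨ (w y = 0 ∧ fderiv ℝ w y = 0) := by
    rcases hs with h | h
    · refine ⟨tsupport f, h, fun y hy => Or.inl ⟨image_eq_zero_of_notMem_tsupport hy, ?_⟩⟩
      exact Function.notMem_support.1 fun h' => hy (support_fderiv_subset ℝ h')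
    · refine ⟨tsupport w, h, fun y hy => Or.inr ⟨image_eq_zero_of_notMem_tsupport hy, ?_⟩⟩
      exact Function.notMem_support.1 fun h' => hy (support_fderiv_subset ℝ h')
  obtain ⟨K, hK, hKz⟩ := hsupp
  have h1 (i : ι) : Integrable fun y =>
      fderiv ℝ f y (EuclideanSpace.single i 1) * w y i := by
    refine Continuous.integrable_of_hasCompactSupport (by fun_prop) (.intro hK fun y hy => ?_)
    rcases hKz y hy with h | h <;> simp [h]
  have h2 (i : ι) : Integrable fun y =>
      f y * fderiv ℝ w y (EuclideanSpace.single i 1) i := by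
    refine Continuous.integrable_of_hasCompactSupport (by fun_prop) (.intro hK fun y hy => ?_)
    rcases hKz y hy with h | h <;> simp [h]
  have h3 (i : ι) : Integrable fun y => f y * w y i := by
    refine Continuous.integrable_of_hasCompactSupport (by fun_prop) (.intro hK fun y hy => ?_)
    rcases hKz y hy with h | h <;> simp [h]
  have hwi (i : ι) (y : EuclideanSpace ℝ ι) : HasFDerivAt (fun z => w z i)
      ((EuclideanSpace.proj i).comp (fderiv ℝ w y)) y :=
    (EuclideanSpace.proj i : EuclideanSpace ℝ ι →L[ℝ] ℝ).hasFDerivAt.comp y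
      (hw.differentiable one_ne_zero y).hasFDerivAt
  have hfd (i : ι) (y v : EuclideanSpace ℝ ι) :
      fderiv ℝ (fun z => w z i) y v = fderiv ℝ w y v i := by
    rw [(hwi i y).fderiv]; rfl
  have key (i : ι) := integral_mul_fderiv_eq_neg_fderiv_mul_of_integrable
    (μ := volume) (f := f) (g := fun y => w y i) (v := EuclideanSpace.single i 1)
    (h1 i) (by simpa only [hfd] using h2 i) (h3 i) (fun y _ => hf.differentiable one_ne_zero y)
    (fun y _ => (hwi i y).differentiableAt)
  simp only [hfd] at key
  simp only [Finset.mul_sum]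
  rw [integral_finsetSum _ fun i _ => h2 i]
  simp only [key, Finset.sum_neg_distrib, neg_neg]
  rw [← integral_finsetSum _ fun i _ => h1 i]
  refine integral_congr_ae (.of_forall fun y => ?_)
  conv_lhs => simp only []; rw [← EuclideanSpace.sum_smul_single (w y)]
  simp [map_sum, mul_comm]

/-- A radial function times the position vector is a gradient, hence orthogonal to
divergence-free fields. -/
lemma integral_radial_mul_inner_eq_zero {ι : Type*} [Fintype ι] [DecidableEq ι] [Nonempty ι]
    {ψ : EuclideanSpace ℝ ι → ℝ} {w : EuclideanSpace ℝ ι → EuclideanSpace ℝ ι}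
    (hψ : Continuous ψ) (hrad : ∀ a b, ‖a‖ = ‖b‖ → ψ a = ψ b) (hs : HasCompactSupport ψ)
    (hw : ContDiff ℝ 1 w)
    (hdiv : ∀ y, ∑ i, fderiv ℝ w y (EuclideanSpace.single i 1) i = 0) :
    ∫ y, ψ y * inner ℝ y (w y) = 0 := by
  obtain ⟨v, hv⟩ := exists_norm_eq (EuclideanSpace ℝ ι) zero_le_one
  obtain ⟨R, hR, hRs⟩ := hs.isCompact.isBounded.subset_closedBall_lt 0 0
  have hz (y) (hy : R < ‖y‖) : ψ y = 0 := by
    by_contra h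
    have := hRs (subset_tsupport ψ h)
    simp at this
    linarith
  let g : ℝ → ℝ := fun t => ψ (√t • v)
  have hg : Continuous g := by fun_prop
  have hgψ (y) : g (‖y‖ ^ 2) = ψ y := hrad _ _ (by simp [norm_smul, hv])
  let G : ℝ → ℝ := fun q => ∫ t in (R ^ 2)..q, g t
  have hG (q) : HasDerivAt G (g q) q :=
    (hg.integral_hasStrictDerivAt _ _).hasDerivAt
  have hG1 : ContDiff ℝ 1 G := by
    rw [contDiff_one_iff_deriv]
    exact ⟨fun q => (hG q).differentiableAt, by simpa only [funext fun q => (hG q).deriv]⟩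
  let f : EuclideanSpace ℝ ι → ℝ := fun y => G (‖y‖ ^ 2)
  have hf1 : ContDiff ℝ 1 f := hG1.comp (contDiff_norm_sq ℝ)
  have hfs : HasCompactSupport f := by
    refine .intro (isCompact_closedBall 0 R) fun y hy => ?_
    have hy : R < ‖y‖ := by simpa using hy
    refine intervalIntegral.integral_zero_ae (.of_forall fun t ht => hz _ ?_)
    rw [Set.uIoc_of_le (by gcongr)] at ht
    simpa [norm_smul, hv, abs_of_nonneg] using Real.lt_sqrt_of_sq_lt ht.1
  have hfd (y z) : fderiv ℝ f y z = 2 * (ψ y * inner ℝ y z) := by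
    have := (hG (‖y‖ ^ 2)).comp_hasFDerivAt y (hasStrictFDerivAt_norm_sq y).hasFDerivAt
    rw [show f = G ∘ fun y => ‖y‖ ^ 2 from rfl, this.fderiv, hgψ]
    simp
    ring
  have key := integral_fderiv_apply_eq_neg_integral_mul_div hf1 hw (.inl hfs)
  simpa [hfd, hdiv, integral_const_mul] using key

/-- The radial component of the radial derivative of a divergence-free field has vanishing
radially weighted integral. -/
lemma integral_radial_mul_inner_fderiv_eq_zero
    {ι : Type*} [Fintype ι] [DecidableEq ι] [Nonempty ι]
    {ψ : EuclideanSpace ℝ ι → ℝ} {w : EuclideanSpace ℝ ι → EuclideanSpace ℝ ι}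
    (hψ : ContDiff ℝ 1 ψ) (hrad : ∀ a b, ‖a‖ = ‖b‖ → ψ a = ψ b) (hs : HasCompactSupport ψ)
    (hw : ContDiff ℝ 1 w)
    (hdiv : ∀ y, ∑ i, fderiv ℝ w y (EuclideanSpace.single i 1) i = 0) :
    ∫ y, ψ y * inner ℝ y (fderiv ℝ w y y) = 0 := by
  have hψ' : Continuous (fderiv ℝ ψ) := hψ.continuous_fderiv one_ne_zero
  have hw' : Continuous (fderiv ℝ w) := hw.continuous_fderiv one_ne_zero
  have hψc := hψ.continuous
  have hwc := hw.continuous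
  have hwd (y) := (hw.differentiable one_ne_zero y).hasFDerivAt
  have hψd (y) := (hψ.differentiable one_ne_zero y).hasFDerivAt
  have hp (y z) : fderiv ℝ (fun y => inner ℝ y (w y)) y z
      = inner ℝ y (fderiv ℝ w y z) + inner ℝ z (w y) := by
    have h : HasFDerivAt (fun y => inner ℝ y (w y)) _ y := (hasFDerivAt_id y).inner ℝ (hwd y)
    rw [h.fderiv]
    simp
  have hdv (y) : ∑ i, fderiv ℝ (fun y => ψ y • y) y (EuclideanSpace.single i 1) i
      = Fintype.card ι * ψ y + fderiv ℝ ψ y y := by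
    have h : HasFDerivAt (fun y => ψ y • y) _ y := (hψd y).smul (hasFDerivAt_id y)
    rw [h.fderiv]
    conv_rhs => rw [← EuclideanSpace.sum_smul_single y, map_sum]
    simp [EuclideanSpace.sum_smul_single, Finset.sum_add_distrib, mul_comm]
  have hrad' (a b : EuclideanSpace ℝ ι) (h : ‖a‖ = ‖b‖) : fderiv ℝ ψ a a = fderiv ℝ ψ b b := by
    have hd (y : EuclideanSpace ℝ ι) :
        HasDerivAt (fun s : ℝ => ψ (s • y)) (fderiv ℝ ψ y y) 1 := by
      have h1 : HasDerivAt (fun s : ℝ => s • y) y 1 := by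
        simpa using (hasDerivAt_id (1 : ℝ)).smul_const y
      exact HasFDerivAt.comp_hasDerivAt (1 : ℝ) (by simpa using hψd y) h1
    refine (hd a).unique ?_
    rw [funext fun s : ℝ => hrad (s • a) (s • b) (by simp [norm_smul, h])]
    exact hd b
  have hs' : HasCompactSupport (fun y => fderiv ℝ ψ y y) := by
    refine .intro hs.isCompact fun y hy => ?_
    rw [Function.notMem_support.1 fun h' => hy (support_fderiv_subset ℝ h')]
    simp
  have hzero := integral_radial_mul_inner_eq_zero
    (ψ := fun y => ((Fintype.card ι + 1) * ψ y + fderiv ℝ ψ y y)) (by fun_prop)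
    (fun a b h => by simp only [hrad a b h, hrad' a b h]) (hs.mul_left.add hs') hw hdiv
  have key := integral_fderiv_apply_eq_neg_integral_mul_div
    (f := fun y => inner ℝ y (w y)) (w := fun y => ψ y • y)
    (contDiff_id.inner ℝ hw) (hψ.smul contDiff_id) (.inr hs.smul_right)
  simp only [hp, hdv] at key
  have i1 : Integrable fun y => ψ y * inner ℝ y (fderiv ℝ w y y) :=
    Continuous.integrable_of_hasCompactSupport (by fun_prop) hs.mul_right
  have i2 : Integrable fun y => ψ y * inner ℝ y (w y) :=
    Continuous.integrable_of_hasCompactSupport (by fun_prop) hs.mul_right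
  have i3 : Integrable fun y => (Fintype.card ι * ψ y + fderiv ℝ ψ y y) * inner ℝ y (w y) :=
    Continuous.integrable_of_hasCompactSupport (by fun_prop) (hs.mul_left.add hs').mul_right
  have e1 : ∫ y, (inner ℝ y (fderiv ℝ w y (ψ y • y)) + inner ℝ (ψ y • y) (w y))
      = (∫ y, ψ y * inner ℝ y (fderiv ℝ w y y)) + ∫ y, ψ y * inner ℝ y (w y) := by
    rw [← integral_add i1 i2]
    simp [real_inner_smul_left, real_inner_smul_right]
  have e2 : ∫ y, ((Fintype.card ι + 1) * ψ y + fderiv ℝ ψ y y) * inner ℝ y (w y) =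
      (∫ y, (Fintype.card ι * ψ y + fderiv ℝ ψ y y) * inner ℝ y (w y))
        + ∫ y, ψ y * inner ℝ y (w y) := by
    rw [← integral_add i3 i2]
    congr 1 with y
    ring
  simp only [mul_comm (inner ℝ _ (w _))] at key
  linarith

/-- The weight `‖y‖⁻²` is reached from `(‖y‖² + δ)⁻¹` by dominated convergence. -/
lemma integral_radial_mul_inner_fderiv_div_norm_sq_eq_zero
    {ι : Type*} [Fintype ι] [DecidableEq ι] [Nonempty ι]
    {ψ : EuclideanSpace ℝ ι → ℝ} {w : EuclideanSpace ℝ ι → EuclideanSpace ℝ ι}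
    (hψ : ContDiff ℝ 1 ψ) (hrad : ∀ a b, ‖a‖ = ‖b‖ → ψ a = ψ b) (hs : HasCompactSupport ψ)
    (hw : ContDiff ℝ 1 w)
    (hdiv : ∀ y, ∑ i, fderiv ℝ w y (EuclideanSpace.single i 1) i = 0) :
    ∫ y, ψ y * (‖y‖ ^ 2)⁻¹ * inner ℝ y (fderiv ℝ w y y) = 0 := by
  have hw' : Continuous (fderiv ℝ w) := hw.continuous_fderiv one_ne_zero
  have hψc := hψ.continuous
  let δ : ℕ → ℝ := fun n => 1 / ((n : ℝ) + 1)
  have hδ (n) : 0 < δ n := by positivity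
  have hδ0 : Filter.Tendsto δ .atTop (nhds 0) := tendsto_one_div_add_atTop_nhds_zero_nat
  have hne (n) (y : EuclideanSpace ℝ ι) : ‖y‖ ^ 2 + δ n ≠ 0 := by have := hδ n; positivity
  have hn (n) : ∫ y, ψ y * (‖y‖ ^ 2 + δ n)⁻¹ * inner ℝ y (fderiv ℝ w y y) = 0 :=
    integral_radial_mul_inner_fderiv_eq_zero
      (hψ.mul (((contDiff_norm_sq ℝ).add contDiff_const).inv (hne n)))
      (fun a b h => by simp only [hrad a b h, h]) hs.mul_right hw hdiv
  have hlim := tendsto_integral_of_dominated_convergence (μ := volume)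
    (F := fun n y => ψ y * (‖y‖ ^ 2 + δ n)⁻¹ * inner ℝ y (fderiv ℝ w y y))
    (f := fun y => ψ y * (‖y‖ ^ 2)⁻¹ * inner ℝ y (fderiv ℝ w y y))
    (fun y => ‖ψ y‖ * ‖fderiv ℝ w y‖)
    (fun n => by
      have := (contDiff_norm_sq ℝ (E := EuclideanSpace ℝ ι) (n := 1)).continuous
      have : Continuous fun y : EuclideanSpace ℝ ι => (‖y‖ ^ 2 + δ n)⁻¹ :=
        (this.add continuous_const).inv₀ (hne n)
      exact Continuous.aestronglyMeasurable (by fun_prop))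
    (Continuous.integrable_of_hasCompactSupport (by fun_prop) hs.norm.mul_right)
    (fun n => .of_forall fun y => ?_) (.of_forall fun y => ?_)
  · simp only [hn] at hlim
    exact tendsto_nhds_unique hlim tendsto_const_nhds
  · have h1 : ‖inner ℝ y (fderiv ℝ w y y)‖ ≤ ‖fderiv ℝ w y‖ * ‖y‖ ^ 2 :=
      calc _ ≤ ‖y‖ * ‖fderiv ℝ w y y‖ := norm_inner_le_norm _ _
        _ ≤ ‖y‖ * (‖fderiv ℝ w y‖ * ‖y‖) := by gcongr; exact ContinuousLinearMap.le_opNorm _ _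
        _ = _ := by ring
    have h2 : 0 < ‖y‖ ^ 2 + δ n := by have := hδ n; positivity
    rw [mul_assoc, norm_mul, norm_mul, norm_inv, Real.norm_of_nonneg h2.le]
    gcongr
    rw [inv_mul_le_iff₀ h2]
    nlinarith [norm_nonneg (fderiv ℝ w y), hδ n]
  · rcases eq_or_ne y 0 with rfl | hy
    · simp
    · have : ‖y‖ ^ 2 + 0 ≠ 0 := by simpa using hy
      simpa using (((hδ0.const_add (‖y‖ ^ 2)).inv₀ this).const_mul (ψ y)).mul_const
        (inner ℝ y (fderiv ℝ w y y))

/-- Differentiation of a translation-averaged field under the integral sign. -/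
lemma hasFDerivAt_integral_apply_add {E F G : Type*} [NormedAddCommGroup E] [NormedSpace ℝ E]
    [FiniteDimensional ℝ E] [MeasurableSpace E] [BorelSpace E]
    [NormedAddCommGroup F] [NormedSpace ℝ F] [NormedAddCommGroup G] [NormedSpace ℝ G]
    [CompleteSpace G]
    {μ : Measure E} {k : E → F →L[ℝ] G} (hk : Integrable k μ) (hs : HasCompactSupport k)
    {u : E → F} (hu : ContDiff ℝ 1 u) (x : E) :
    Integrable (fun l => (k l).comp (fderiv ℝ u (x + l))) μ ∧
    HasFDerivAt (fun y => ∫ l, k l (u (y + l)) ∂μ)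
      (∫ l, (k l).comp (fderiv ℝ u (x + l)) ∂μ) x := by
  have hu' : Continuous (fderiv ℝ u) := hu.continuous_fderiv one_ne_zero
  have huc := hu.continuous
  have := FiniteDimensional.proper ℝ E
  obtain ⟨R, hR⟩ := hs.isCompact.isBounded.subset_closedBall 0
  have hz (l : E) (hl : R < ‖l‖) : k l = 0 := by
    by_contra h
    have := hR (subset_tsupport k h)
    simp at this
    linarith
  have hbound {v : E → ℝ} (hv : Continuous v) :
      ∃ C, ∀ y ∈ Metric.ball x 1, ∀ l, ‖k l‖ * v (y + l) ≤ ‖k l‖ * C := by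
    obtain ⟨C, hC⟩ := (isCompact_closedBall x (R + 1)).exists_bound_of_continuousOn hv.continuousOn
    refine ⟨C, fun y hy l => ?_⟩
    rcases lt_or_ge R ‖l‖ with hl | hl
    · simp [hz l hl]
    · refine mul_le_mul_of_nonneg_left ((le_abs_self _).trans (hC _ ?_)) (norm_nonneg _)
      rw [mem_closedBall_iff_norm, add_sub_right_comm]
      rw [mem_ball_iff_norm] at hy
      exact (norm_add_le _ _).trans (by linarith)
  have hm1 (y : E) : AEStronglyMeasurable (fun l => k l (u (y + l))) μ :=
    (ContinuousLinearMap.apply ℝ G).flip.aestronglyMeasurable_comp₂ hk.1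
      (by fun_prop : Continuous fun l => u (y + l)).aestronglyMeasurable
  have hm2 (y : E) : AEStronglyMeasurable (fun l => (k l).comp (fderiv ℝ u (y + l))) μ :=
    (ContinuousLinearMap.compL ℝ E F G).aestronglyMeasurable_comp₂ hk.1
      (by fun_prop : Continuous fun l => fderiv ℝ u (y + l)).aestronglyMeasurable
  obtain ⟨C, hC⟩ := hbound huc.norm
  obtain ⟨C', hC'⟩ := hbound hu'.norm
  have hx : x ∈ Metric.ball x 1 := Metric.mem_ball_self one_pos
  have hi : Integrable (fun l => k l (u (x + l))) μ :=
    (hk.norm.mul_const C).mono' (hm1 x)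
      (.of_forall fun l => ((k l).le_opNorm _).trans (hC x hx l))
  refine ⟨(hk.norm.mul_const C').mono' (hm2 x)
    (.of_forall fun l => ((k l).opNorm_comp_le _).trans (hC' x hx l)), ?_⟩
  refine hasFDerivAt_integral_of_dominated_of_fderiv_le
    (F' := fun y l => (k l).comp (fderiv ℝ u (y + l)))
    (bound := fun l => ‖k l‖ * C') (Metric.ball_mem_nhds x one_pos) (.of_forall hm1) hi (hm2 x)
    (.of_forall fun l y hy => ((k l).opNorm_comp_le _).trans (hC' y hy l))
    (hk.norm.mul_const C') (.of_forall fun l y _ => ?_)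
  exact (k l).hasFDerivAt.comp y
    ((hasFDerivAt_comp_add_right l).2 (hu.differentiable one_ne_zero (y + l)).hasFDerivAt)

/-- The mollified longitudinal field of a divergence-free field is divergence-free. -/
theorem mollified_longitudinal_div_free
    (u : EuclideanSpace ℝ (Fin 3) → EuclideanSpace ℝ (Fin 3)) (hu : ContDiff ℝ 1 u)
    (hdiv : ∀ x, ∑ j, fderiv ℝ u x (EuclideanSpace.single j 1) j = 0)
    (φ : EuclideanSpace ℝ (Fin 3) → ℝ) (hφ : ContDiff ℝ (⊤ : ℕ∞) φ)
    (hφrad : ∀ ℓ ℓ' : EuclideanSpace ℝ (Fin 3), ‖ℓ‖ = ‖ℓ'‖ → φ ℓ = φ ℓ')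
    (hφsupp : HasCompactSupport φ) (hφint : (∫ ℓ, φ ℓ) = 1)
    (ε : ℝ) (hε : 0 < ε) (x : EuclideanSpace ℝ (Fin 3)) :
    ∑ i, fderiv ℝ
      (fun y : EuclideanSpace ℝ (Fin 3) =>
        ∫ ℓ : EuclideanSpace ℝ (Fin 3),
          (ε ^ 3)⁻¹ * φ (ε⁻¹ • ℓ) * ((ℓ i / ‖ℓ‖) * ∑ j, (ℓ j / ‖ℓ‖) * u (y + ℓ) j))
      x (EuclideanSpace.single i 1) = 0 := by
  let ψ : EuclideanSpace ℝ (Fin 3) → ℝ := fun ℓ => (ε ^ 3)⁻¹ * φ (ε⁻¹ • ℓ)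
  have hψ : ContDiff ℝ 1 ψ :=
    contDiff_const.mul ((hφ.of_le (by norm_cast)).comp (contDiff_const_smul ε⁻¹))
  have hψs : HasCompactSupport ψ := (hφsupp.comp_smul (inv_ne_zero hε.ne')).mul_left
  have hψrad (a b : EuclideanSpace ℝ (Fin 3)) (h : ‖a‖ = ‖b‖) : ψ a = ψ b := by
    simp only [ψ, hφrad (ε⁻¹ • a) (ε⁻¹ • b) (by simp [norm_smul, h])]
  have hψi : Integrable ψ := hψ.continuous.integrable_of_hasCompactSupport hψs
  have hψc := hψ.continuous
  let k : Fin 3 → EuclideanSpace ℝ (Fin 3) → EuclideanSpace ℝ (Fin 3) →L[ℝ] ℝ :=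
    fun i ℓ => ψ ℓ • ((‖ℓ‖ ^ 2)⁻¹ * ℓ i) • innerSL ℝ ℓ
  have hks (i) : HasCompactSupport (k i) := hψs.smul_right
  have hki (i) : Integrable (k i) := by
    refine hψi.norm.mono' ?_ (.of_forall fun ℓ => ?_)
    · have h1 : Measurable fun ℓ : EuclideanSpace ℝ (Fin 3) => (‖ℓ‖ ^ 2)⁻¹ * ℓ i := by fun_prop
      exact hψc.aestronglyMeasurable.smul
        (h1.aestronglyMeasurable.smul (innerSL ℝ).continuous.aestronglyMeasurable)
    · simp only [k, norm_smul, innerSL_apply_norm, norm_mul, norm_inv, norm_pow, norm_norm]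
      refine mul_le_of_le_one_right (norm_nonneg _) ?_
      rw [mul_assoc]
      refine inv_mul_le_one_of_le₀ ?_ (by positivity)
      rw [sq]
      gcongr
      exact PiLp.norm_apply_le ℓ i
  have hval (i : Fin 3) (y ℓ : EuclideanSpace ℝ (Fin 3)) :
      (ε ^ 3)⁻¹ * φ (ε⁻¹ • ℓ) * ((ℓ i / ‖ℓ‖) * ∑ j, (ℓ j / ‖ℓ‖) * u (y + ℓ) j)
        = k i ℓ (u (y + ℓ)) := by
    simp only [k, ψ, smul_apply, innerSL_apply_apply, PiLp.inner_apply,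
      smul_eq_mul, RCLike.inner_apply, conj_trivial, div_eq_mul_inv, Finset.mul_sum]
    exact Finset.sum_congr rfl fun j _ => by ring
  have hD (i) := hasFDerivAt_integral_apply_add (hki i) (hks i) hu x
  simp only [hval, (hD _).2.fderiv]
  simp only [ContinuousLinearMap.integral_apply (hD _).1]
  rw [← integral_finsetSum _ fun i _ => (hD i).1.apply_continuousLinearMap _]
  have hut : ContDiff ℝ 1 fun ℓ => u (x + ℓ) := hu.comp (contDiff_const.add contDiff_id)
  have key := integral_radial_mul_inner_fderiv_div_norm_sq_eq_zero hψ hψrad hψs hut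
    (fun y => by simpa only [fderiv_comp_add_left] using hdiv (x + y))
  rw [← key]
  congr 1 with ℓ
  rw [fderiv_comp_add_left]
  conv_rhs => rw [← congrArg (fderiv ℝ u (x + ℓ)) (EuclideanSpace.sum_smul_single ℓ)]
  simp only [map_sum, inner_sum, Finset.mul_sum]
  refine Finset.sum_congr rfl fun i _ => ?_
  simp [k, real_inner_smul_right]
  ring
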